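/- The Lusternik–Schnirelmann category of the compact symplectic group Sp(3) is at most 5: there exist six open sets U₀,…,U₅ covering Sp(3) such that each inclusion map Uᵢ ↪ Sp(3) is nullhomotopic. -/

import Mathlib

open Quaternion Matrix

/-- `CatLE X n` : `cat(X) ≤ n`, i.e. `X` can be covered by `n+1` open sets,
each of whose inclusion maps into `X` is nullhomotopic. -/
def CatLE (X : Type*) [TopologicalSpace X] (n : ℕ) : Prop :=
  ∃ U : Fin (n + 1) → Set X,
    (∀ i, IsOpen (U i)) ∧ (⋃ i, U i) = Set.univ ∧
    ∀ i, (⟨Subtype.val, continuous_subtype_val⟩ : C(U i, X)).Nullhomotopic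

/-- The compact symplectic group `Sp(3)`, realized as the quaternionic unitary
group of 3×3 matrices, with the subspace topology. -/
abbrev Sp3 : Type :=
  {A : Matrix (Fin 3) (Fin 3) ℍ[ℝ] // Aᴴ * A = 1}


instance Quaternion.instStarModuleReal : StarModule ℝ ℍ[ℝ] :=
  ⟨fun r a => by rw [Quaternion.star_smul, star_trivial r]⟩

/-- The quaternion unit `i`. -/
def Quaternion.unitI : ℍ[ℝ] := ⟨0, 1, 0, 0⟩

theorem Quaternion.re_unitI : unitI.re = 0 := rfl

theorem Quaternion.star_unitI_mul_unitI : star unitI * unitI = 1 := by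
  rw [Quaternion.star_mul_self, normSq_def']
  norm_num [unitI]

namespace Matrix

section Units

variable {n : Type*} [Fintype n]

/-- A square quaternionic matrix with trivial kernel is invertible. -/
theorem isUnit_of_quaternion_mulVec_ne_zero [DecidableEq n] {D : Matrix n n ℍ[ℝ]}
    (h : ∀ x, D *ᵥ x = 0 → x = 0) : IsUnit D := by
  have : IsArtinianRing (Matrix n n ℍ[ℝ])ᵐᵒᵖ := IsArtinianRing.of_finite ℝ _
  rw [IsArtinianRing.isUnit_iff_isLeftRegular]
  intro B C hBC
  have hD : D * (B - C) = 0 := by rw [mul_sub, sub_eq_zero]; exact hBC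
  ext1 i j
  have := h (fun k => (B - C) k j) (by ext1 k; exact congrFun (congrFun hD k) j)
  exact sub_eq_zero.mp (congrFun this i)

theorem eq_zero_of_star_dotProduct_self {x : n → ℍ[ℝ]} (h : star x ⬝ᵥ x = 0) : x = 0 := by
  have hx : ((∑ i, normSq (x i) : ℝ) : ℍ[ℝ]) = 0 := by
    rw [← h]
    simp only [dotProduct, Pi.star_apply, Quaternion.star_mul_self]
    exact map_sum (algebraMap ℝ ℍ[ℝ]) _ _
  have hx' : (∑ i, normSq (x i) : ℝ) = 0 := congrArg QuaternionAlgebra.re hx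
  rw [Finset.sum_eq_zero_iff_of_nonneg fun i _ => normSq_nonneg] at hx'
  ext1 i
  exact normSq_eq_zero.mp (hx' i (Finset.mem_univ i))

theorem star_mulVec_dotProduct_mulVec [DecidableEq n] {A : Matrix n n ℍ[ℝ]} (hA : Aᴴ * A = 1)
    (x y : n → ℍ[ℝ]) : star (A *ᵥ x) ⬝ᵥ (A *ᵥ y) = star x ⬝ᵥ y := by
  rw [star_mulVec, dotProduct_mulVec, vecMul_vecMul, hA, vecMul_one]

end Units

section Cayley

variable {n : Type*} [Fintype n] [DecidableEq n]

/-- The denominator of the Cayley path from `G` to `A`. -/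
noncomputable def cayleyDen (G A : Matrix n n ℍ[ℝ]) (t : ℝ) : Matrix n n ℍ[ℝ] :=
  (1 + t) • G + (1 - t) • A

/-- The path from `G` to `A` which is linear in the Cayley coordinates centred at `G`. -/
noncomputable def cayleyPath (G A : Matrix n n ℍ[ℝ]) (t : ℝ) : Matrix n n ℍ[ℝ] :=
  cayleyDen A G t * Ring.inverse (cayleyDen G A t) * G

variable {G A : Matrix n n ℍ[ℝ]}

theorem isUnit_cayleyDen (hG : Gᴴ * G = 1) (hA : Aᴴ * A = 1) (h : IsUnit (A + G))
    {t : ℝ} (ht : 0 ≤ t) : IsUnit (cayleyDen G A t) := by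
  rcases ht.eq_or_lt with rfl | ht
  · simpa [cayleyDen, add_comm] using h
  refine isUnit_of_quaternion_mulVec_ne_zero fun x hx => eq_zero_of_star_dotProduct_self ?_
  have hx' : (1 + t) • (G *ᵥ x) = -((1 - t) • (A *ᵥ x)) := by
    rw [cayleyDen, add_mulVec, smul_mulVec, smul_mulVec] at hx
    exact eq_neg_of_add_eq_zero_left hx
  have hn := congrArg (fun v => star v ⬝ᵥ v) hx'
  simp only [star_neg, StarModule.star_smul, star_trivial, neg_dotProduct, dotProduct_neg,
    smul_dotProduct, dotProduct_smul, star_mulVec_dotProduct_mulVec hG,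
    star_mulVec_dotProduct_mulVec hA, smul_smul] at hn
  rw [smul_neg, neg_neg, smul_smul, ← sub_eq_zero, ← sub_smul] at hn
  refine (smul_eq_zero.mp hn).resolve_left ?_
  nlinarith

theorem cayleyPath_mem (hG : Gᴴ * G = 1) (hA : Aᴴ * A = 1) (h : IsUnit (A + G))
    {t : ℝ} (ht : 0 ≤ t) : (cayleyPath G A t)ᴴ * cayleyPath G A t = 1 := by
  obtain ⟨u, hu⟩ := isUnit_cayleyDen hG hA h ht
  have hN : (cayleyDen A G t)ᴴ * cayleyDen A G t = (u : Matrix n n ℍ[ℝ])ᴴ * u := by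
    rw [hu]
    simp only [cayleyDen, conjTranspose_add, conjTranspose_smul, star_trivial, add_mul, mul_add,
      smul_mul_assoc, mul_smul_comm, hG, hA]
    module
  have hu' : (u : Matrix n n ℍ[ℝ]) * (↑u⁻¹ : Matrix n n ℍ[ℝ]) = 1 := u.mul_inv
  have hv : (↑u⁻¹ : Matrix n n ℍ[ℝ])ᴴ * (u : Matrix n n ℍ[ℝ])ᴴ = 1 := by
    rw [← conjTranspose_mul, hu', conjTranspose_one]
  rw [cayleyPath, ← hu, Ring.inverse_unit]
  calc _ = Gᴴ * ((↑u⁻¹ : Matrix n n ℍ[ℝ])ᴴ * ((cayleyDen A G t)ᴴ * cayleyDen A G t)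
        * (↑u⁻¹ : Matrix n n ℍ[ℝ])) * G := by
        simp only [conjTranspose_mul, mul_assoc]
    _ = Gᴴ * (((↑u⁻¹ : Matrix n n ℍ[ℝ])ᴴ * (u : Matrix n n ℍ[ℝ])ᴴ)
        * ((u : Matrix n n ℍ[ℝ]) * (↑u⁻¹ : Matrix n n ℍ[ℝ]))) * G := by
        rw [hN]; simp only [mul_assoc]
    _ = 1 := by rw [hu', hv, mul_one, mul_one, hG]

theorem cayleyPath_zero (h : IsUnit (A + G)) : cayleyPath G A 0 = G := by
  have h' : IsUnit (G + A) := by rwa [add_comm]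
  simp [cayleyPath, cayleyDen, add_comm A G, Ring.mul_inverse_cancel _ h']

theorem cayleyPath_one (hG : Gᴴ * G = 1) (hA : Aᴴ * A = 1) (h : IsUnit (A + G)) :
    cayleyPath G A 1 = A := by
  have hu := isUnit_cayleyDen hG hA h zero_le_one
  have h2 : cayleyDen A G 1 = A * Gᴴ * cayleyDen G A 1 := by
    simp [cayleyDen, mul_assoc, hG]
  rw [cayleyPath, h2, Ring.mul_inverse_cancel_right _ _ hu, mul_assoc, hG, mul_one]

end Cayley

section Topology

variable {n : Type*} [Fintype n] [DecidableEq n]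

attribute [local instance] Matrix.linftyOpNormedRing Matrix.linftyOpNormedAlgebra

theorem continuousAt_inverse_of_quaternion {D : Matrix n n ℍ[ℝ]} (hD : IsUnit D) :
    ContinuousAt Ring.inverse D := by
  have : CompleteSpace (Matrix n n ℍ[ℝ]) := FiniteDimensional.complete ℝ _
  obtain ⟨u, rfl⟩ := hD
  exact NormedRing.inverse_continuousAt u

theorem isOpen_isUnit_quaternion : IsOpen {D : Matrix n n ℍ[ℝ] | IsUnit D} := by
  have : CompleteSpace (Matrix n n ℍ[ℝ]) := FiniteDimensional.complete ℝ _
  exact Units.isOpen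

end Topology

end Matrix

/-- The elements of `Sp(3)` on which the Cayley transform centred at `G` is defined. -/
def cayleyDomain (G : Sp3) : Set Sp3 := {A | IsUnit (A.1 + G.1)}

theorem isOpen_cayleyDomain (G : Sp3) : IsOpen (cayleyDomain G) :=
  isOpen_isUnit_quaternion.preimage (continuous_subtype_val.add continuous_const)

theorem nullhomotopic_cayleyDomain (G : Sp3) :
    (⟨Subtype.val, continuous_subtype_val⟩ : C(cayleyDomain G, Sp3)).Nullhomotopic := by
  refine ⟨G, ContinuousMap.Homotopic.symm ⟨⟨⟨fun p => ⟨cayleyPath G.1 p.2.1.1 p.1,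
    cayleyPath_mem G.2 p.2.1.2 p.2.2 p.1.2.1⟩, ?_⟩, ?_, ?_⟩⟩⟩
  · refine Continuous.subtype_mk ?_ _
    have hA : Continuous fun p : unitInterval × cayleyDomain G => p.2.1.1 := by fun_prop
    have ht : Continuous fun p : unitInterval × cayleyDomain G => (p.1 : ℝ) := by fun_prop
    refine (Continuous.mul ?_ ?_).mul continuous_const
    · exact ((continuous_const.add ht).smul hA).add
        ((continuous_const.sub ht).smul continuous_const)
    · have hD : Continuous fun p : unitInterval × cayleyDomain G =>
          cayleyDen G.1 p.2.1.1 p.1 :=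
        ((continuous_const.add ht).smul continuous_const).add
          ((continuous_const.sub ht).smul hA)
      rw [continuous_iff_continuousAt]
      intro p
      exact ContinuousAt.comp (f := fun p : unitInterval × cayleyDomain G =>
          cayleyDen G.1 p.2.1.1 p.1)
        (continuousAt_inverse_of_quaternion (isUnit_cayleyDen G.2 p.2.1.2 p.2.2 p.1.2.1))
        hD.continuousAt
  · intro A
    exact Subtype.ext (cayleyPath_zero A.2)
  · intro A
    exact Subtype.ext (cayleyPath_one G.2 A.1.2 A.2)

theorem catLE_of_cayleyDomain {n : ℕ} (g : Fin (n + 1) → Sp3)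
    (h : ∀ A : Sp3, ∃ i, IsUnit (A.1 + (g i).1)) : CatLE Sp3 n :=
  ⟨fun i => cayleyDomain (g i), fun _ => isOpen_cayleyDomain _,
    Set.eq_univ_of_forall fun A => Set.mem_iUnion.mpr (h A),
    fun _ => nullhomotopic_cayleyDomain _⟩

/-- The diagonal matrix `diag(1, 1, -1)`. -/
noncomputable def lastReflection : Matrix (Fin 3) (Fin 3) ℍ[ℝ] := diagonal ![1, 1, -1]

/-- Negating the last column of an element of `Sp(3)`. -/
noncomputable def negLastColumn (G : Sp3) : Sp3 :=
  ⟨G.1 * lastReflection, by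
    rw [conjTranspose_mul, mul_assoc, ← mul_assoc _ G.1, G.2, one_mul, lastReflection,
      diagonal_conjTranspose, diagonal_mul_diagonal, ← diagonal_one]
    congr 1
    ext1 i
    fin_cases i <;> simp⟩

/-- If `A` lies outside the Cayley domains of `G` and of `negLastColumn G`, then `A` agrees
with `-G` on some nonzero vector with vanishing last coordinate. -/
theorem exists_mulVec_eq_neg_mulVec {A G : Sp3} (h : ¬ IsUnit (A.1 + G.1))
    (h' : ¬ IsUnit (A.1 + (negLastColumn G).1)) :
    ∃ x : Fin 3 → ℍ[ℝ], x ≠ 0 ∧ x 2 = 0 ∧ A.1 *ᵥ x = -(G.1 *ᵥ x) := by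
  have key : ∀ {D : Matrix (Fin 3) (Fin 3) ℍ[ℝ]}, ¬ IsUnit (A.1 + D) →
      ∃ x, x ≠ 0 ∧ A.1 *ᵥ x = -(D *ᵥ x) := by
    intro D hD
    by_contra! hx
    refine hD (isUnit_of_quaternion_mulVec_ne_zero fun x hx0 => ?_)
    by_contra hne
    rw [add_mulVec] at hx0
    exact hx x hne (eq_neg_of_add_eq_zero_left hx0)
  obtain ⟨x, hx0, hx⟩ := key h
  obtain ⟨y, hy0, hy⟩ := key h'
  have hy' : A.1 *ᵥ y = -(G.1 *ᵥ (lastReflection *ᵥ y)) := by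
    rw [hy, mulVec_mulVec]; rfl
  have hinner := star_mulVec_dotProduct_mulVec A.2 x y
  rw [hx, hy', star_neg, neg_dotProduct, dotProduct_neg, neg_neg,
    star_mulVec_dotProduct_mulVec G.2] at hinner
  have h2 : star (x 2) * y 2 = 0 := by
    simp only [lastReflection, dotProduct, Fin.sum_univ_three, Pi.star_apply, mulVec_diagonal,
      cons_val_zero, cons_val_one, cons_val, one_mul, neg_mul, mul_neg, add_right_inj] at hinner
    rw [neg_eq_iff_add_eq_zero, ← two_smul ℝ] at hinner
    exact (smul_eq_zero.mp hinner).resolve_left two_ne_zero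
  rcases mul_eq_zero.mp h2 with h2 | h2
  · exact ⟨x, hx0, star_eq_zero.mp h2, hx⟩
  · refine ⟨y, hy0, h2, ?_⟩
    have : lastReflection *ᵥ y = y := by
      ext1 i
      fin_cases i <;> simp [lastReflection, mulVec_diagonal, h2]
    rw [hy', this]

/-- The element of `Sp(3)` with columns `e₃`, `i e₂` and `e₁`. -/
noncomputable def twistedSwap : Sp3 :=
  ⟨!![0, 0, 1; 0, unitI, 0; 1, 0, 0], by
    ext1 i j
    fin_cases i <;> fin_cases j <;>
      simp [mul_apply, Fin.sum_univ_three, star_unitI_mul_unitI]⟩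

/-- The negative of the identity of `Sp(3)`. -/
noncomputable def negOne : Sp3 := ⟨-1, by simp⟩

theorem false_of_quaternion_relations {x₀ x₁ y₀ y₁ z₀ z₁ : ℍ[ℝ]} (hx : x₀ ≠ 0 ∨ x₁ ≠ 0)
    (hy : y₀ ≠ 0 ∨ y₁ ≠ 0) (hz : z₀ ≠ 0 ∨ z₁ ≠ 0) {I : ℍ[ℝ]} (hI : I.re = 0)
    (hyx : star y₀ * x₀ + star y₁ * x₁ = 0)
    (hxz : star x₁ * (I * z₁) = star x₀ * z₀ + star x₁ * z₁)
    (hyz : -(star y₁ * (I * z₁)) = star y₀ * z₀ + star y₁ * z₁) : False := by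
  have hI1 : I - 1 ≠ 0 := fun h => by
    have := congrArg QuaternionAlgebra.re h
    simp [hI] at this
  by_cases hx0 : x₀ = 0
  · have hx1 : star x₁ ≠ 0 := star_ne_zero.mpr (hx.resolve_left (not_not.mpr hx0))
    have hy1 : y₁ = 0 := by
      rw [hx0, mul_zero, zero_add] at hyx
      exact star_eq_zero.mp ((mul_eq_zero.mp hyx).resolve_right (star_ne_zero.mp hx1))
    have hy0 : star y₀ ≠ 0 := star_ne_zero.mpr (hy.resolve_right (not_not.mpr hy1))
    have hz1 : z₁ = 0 := by
      rw [hx0, star_zero, zero_mul, zero_add] at hxz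
      have := mul_left_cancel₀ hx1 hxz
      refine (mul_eq_zero.mp (?_ : (I - 1) * z₁ = 0)).resolve_left hI1
      rw [sub_mul, this, one_mul, sub_self]
    have hz0 : z₀ = 0 := by
      simpa [hy1, hy0] using hyz
    exact hz.elim (· hz0) (· hz1)
  · have hsx0 : star x₀ ≠ 0 := star_ne_zero.mpr hx0
    obtain ⟨a, rfl⟩ : ∃ a, x₁ = a * x₀ := ⟨x₁ * x₀⁻¹, by rw [inv_mul_cancel_right₀ hx0]⟩
    have hy0 : star y₀ = -(star y₁ * a) := by
      rw [← mul_assoc, ← add_mul] at hyx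
      exact eq_neg_of_add_eq_zero_left ((mul_eq_zero.mp hyx).resolve_right hx0)
    have hy1 : star y₁ ≠ 0 := by
      intro h
      rw [h, zero_mul, neg_zero] at hy0
      exact hy.elim (· (star_eq_zero.mp hy0)) (· (star_eq_zero.mp h))
    have hz0 : z₀ = star a * ((I - 1) * z₁) := by
      rw [star_mul, mul_assoc, mul_assoc, ← mul_add] at hxz
      rw [sub_mul, one_mul, mul_sub, mul_left_cancel₀ hsx0 hxz, add_sub_cancel_right]
    have hz1 : z₁ ≠ 0 := by
      rintro rfl
      simp [hz0] at hz
    have h1 : -(I * z₁) = -(a * z₀) + z₁ := by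
      refine mul_left_cancel₀ hy1 ?_
      rw [mul_neg, hyz, hy0]
      noncomm_ring
    have h2 : -I = -(a * star a * (I - 1)) + 1 := by
      refine mul_right_cancel₀ hz1 ?_
      rw [neg_mul, h1, hz0]
      noncomm_ring
    rw [Quaternion.self_mul_star] at h2
    have h3 := congrArg QuaternionAlgebra.re h2
    have h4 : 0 ≤ normSq a := normSq_nonneg
    simp [hI] at h3
    linarith

/-- The Lusternik–Schnirelmann category of `Sp(3)` is at most `5`: there are six
open sets covering `Sp(3)` whose inclusions are nullhomotopic. -/
theorem cat_Sp3_le_five : CatLE Sp3 5 := by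
  refine catLE_of_cayleyDomain ![⟨1, by simp⟩, negLastColumn ⟨1, by simp⟩, negOne,
    negLastColumn negOne, twistedSwap, negLastColumn twistedSwap] fun A => ?_
  by_contra! h
  obtain ⟨x, hx0, hx2, hx⟩ := exists_mulVec_eq_neg_mulVec (G := ⟨1, by simp⟩) (h 0) (h 1)
  obtain ⟨y, hy0, hy2, hy⟩ := exists_mulVec_eq_neg_mulVec (G := negOne) (h 2) (h 3)
  obtain ⟨z, hz0, hz2, hz⟩ := exists_mulVec_eq_neg_mulVec (G := twistedSwap) (h 4) (h 5)
  have ne_zero_or : ∀ {v : Fin 3 → ℍ[ℝ]}, v ≠ 0 → v 2 = 0 → v 0 ≠ 0 ∨ v 1 ≠ 0 := by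
    intro v hv hv2
    by_contra! hv'
    refine hv (funext fun i => ?_)
    fin_cases i
    exacts [hv'.1, hv'.2, hv2]
  have hyx := star_mulVec_dotProduct_mulVec A.2 y x
  have hxz := star_mulVec_dotProduct_mulVec A.2 x z
  have hyz := star_mulVec_dotProduct_mulVec A.2 y z
  simp only [one_mulVec] at hx
  simp only [negOne, neg_mulVec, one_mulVec, neg_neg] at hy
  rw [hy, hx, dotProduct_neg, neg_eq_iff_add_eq_zero, ← two_smul ℝ] at hyx
  replace hyx := (smul_eq_zero.mp hyx).resolve_left two_ne_zero
  rw [hx, hz] at hxz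
  rw [hy, hz] at hyz
  simp only [dotProduct, Fin.sum_univ_three, Pi.star_apply, hx2, mul_zero, add_zero] at hyx
  simp [dotProduct, Fin.sum_univ_three, twistedSwap, hx2, hz2] at hxz
  simp [dotProduct, Fin.sum_univ_three, twistedSwap, hy2, hz2] at hyz
  exact false_of_quaternion_relations (ne_zero_or hx0 hx2) (ne_zero_or hy0 hy2)
    (ne_zero_or hz0 hz2) re_unitI hyx hxz hyz
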